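/- arXiv:2102.01149 — 2 statements merged into one kernel-verified Lean document; each statement's English description precedes it below -/
import Mathlib

section
/- Let σ be the α-approximate adaptive greedy policy and let π* be an adaptive covering policy of minimum expected cost. If the utility function f is integer-valued, then E[C(σ)] ≤ α·H(Q)·E[C(π*)], where H(Q) = Σ_{j=1}^{Q} 1/j is the Q-th harmonic number. -/
/-!
Common framework for the Stochastic Submodular Cover problem
(Hellerstein–Kletenik–Parthasarathy, "A Tight Bound for Stochastic Submodular Cover").
-/

namespace SSC

open Finset
open scoped Classical

noncomputable section

variable {E O : Type*}

/-- A subrealization assigns to each item either a state or `none` (unassigned).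
A realization corresponds to the case where every item is assigned. -/
abbrev Sub (E O : Type*) := E → Option O

/-- `subext ψ ψ'` means `ψ ⊆ ψ'` as partial assignments of states to items. -/
def subext (ψ ψ' : Sub E O) : Prop := ∀ e o, ψ e = some o → ψ' e = some o

/-- `ssubext ψ ψ'` means `ψ ⊂ ψ'` (strict extension). -/
def ssubext (ψ ψ' : Sub E O) : Prop := subext ψ ψ' ∧ ψ ≠ ψ'

/-- Extend a subrealization `ψ` by assigning state `o` to item `e`. -/
def updateSub [DecidableEq E] (ψ : Sub E O) (e : E) (o : O) : Sub E O :=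
  fun e' => if e' = e then some o else ψ e'

/-- View a (full) realization as a subrealization. -/
def toSub (φ : E → O) : Sub E O := fun e => some (φ e)

variable [Fintype E] [DecidableEq E] [Fintype O] [DecidableEq O]

/-- An instance of the Stochastic Submodular Cover problem: positive item costs `c`,
a probability mass function `p` on realizations with mutually independent item states,
and a utility function `f` on subrealizations which is zero on the empty subrealization,
nonnegative, monotone and submodular (pointwise polymatroid), and equal to the goal
value `Q > 0` on every full realization (coverability). -/
structure Problem (E O : Type*) [Fintype E] [DecidableEq E] [Fintype O] [DecidableEq O] where
  c : E → ℝ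
  c_pos : ∀ e, 0 < c e
  p : (E → O) → ℝ
  p_nonneg : ∀ φ, 0 ≤ p φ
  p_sum : ∑ φ : E → O, p φ = 1
  indep : ∀ φ : E → O, p φ = ∏ e : E, ∑ φ' : E → O, if φ' e = φ e then p φ' else 0
  f : Sub E O → ℝ
  f_nonneg : ∀ ψ, 0 ≤ f ψ
  f_empty : f (fun _ => none) = 0
  f_mono : ∀ ψ ψ' : Sub E O, subext ψ ψ' → f ψ ≤ f ψ'
  f_submod : ∀ (ψ ψ' : Sub E O) (e : E) (o : O), subext ψ ψ' → ψ' e = none →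
      f (updateSub ψ' e o) - f ψ' ≤ f (updateSub ψ e o) - f ψ
  Q : ℝ
  Q_pos : 0 < Q
  f_cover : ∀ φ : E → O, f (toSub φ) = Q

variable (M : Problem E O)

/-- Expectation of a random variable `X` with respect to the random realization `Φ`. -/
def Ex (X : (E → O) → ℝ) : ℝ := ∑ φ : E → O, M.p φ * X φ

/-- Probability of an event `A` of the random realization `Φ`. -/
def Pr (A : (E → O) → Prop) : ℝ := ∑ φ : E → O, if A φ then M.p φ else 0

/-- Conditional expectation `E[X | A]`. -/
def cEx (X : (E → O) → ℝ) (A : (E → O) → Prop) : ℝ :=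
  (∑ φ : E → O, if A φ then M.p φ * X φ else 0) / Pr M A

/-- The random marginal increase in utility `F_ψ(e)` from observing the state of `e`. -/
def Fm (ψ : Sub E O) (e : E) (φ : E → O) : ℝ := M.f (updateSub ψ e (φ e)) - M.f ψ

/-- The unit price `υ(e|ψ) = c(e) / E[F_ψ(e)]`. -/
def price (ψ : Sub E O) (e : E) : ℝ := M.c e / Ex M (Fm M ψ e)

/-- An adaptive covering policy: at every subrealization `ψ` with `f ψ < Q` it selects an
item outside `dom ψ`. -/
def IsPolicy (π : Sub E O → E) : Prop := ∀ ψ : Sub E O, M.f ψ < M.Q → ψ (π ψ) = none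

/-- The `α`-approximate adaptive greedy policy: at every `ψ` with `f ψ < Q` the unit price of
the selected item `σ ψ` is at most `α` times the minimum unit price, i.e.
`υ(σ ψ | ψ) ≤ α · υ(e | ψ)` for every `e ∉ dom ψ`, written multiplicatively so that infinite
unit prices (zero expected marginal utility) are handled correctly. -/
def IsGreedy (α : ℝ) (σ : Sub E O → E) : Prop :=
  IsPolicy M σ ∧
    ∀ ψ : Sub E O, M.f ψ < M.Q → ∀ e : E, ψ e = none →
      M.c (σ ψ) * Ex M (Fm M ψ e) ≤ α * M.c e * Ex M (Fm M ψ (σ ψ))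

/-- One step of executing policy `π` on realization `φ`. -/
def stepPol (π : Sub E O → E) (φ : E → O) (ψ : Sub E O) : Sub E O :=
  if M.f ψ < M.Q then updateSub ψ (π ψ) (φ (π ψ)) else ψ

/-- The subrealization reached after `n` steps of executing `π` on `φ`. -/
def execAux (π : Sub E O → E) (φ : E → O) : ℕ → Sub E O
  | 0 => fun _ => none
  | n + 1 => stepPol M π φ (execAux π φ n)

/-- The cover `Ψ(π)` constructed by executing `π` on realization `φ`. -/
def cover (π : Sub E O → E) (φ : E → O) : Sub E O := execAux M π φ (Fintype.card E)

/-- `ψ` is visited when executing `π` on realization `φ`. -/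
def visits (π : Sub E O → E) (φ : E → O) (ψ : Sub E O) : Prop := ∃ n, execAux M π φ n = ψ

/-- The set `S(π)` of items selected when executing `π` on `φ`. -/
def Ssel (π : Sub E O → E) (φ : E → O) : Finset E :=
  Finset.univ.filter fun e => cover M π φ e ≠ none

/-- The cost `C(π)` incurred when executing `π` on `φ`. -/
def C (π : Sub E O → E) (φ : E → O) : ℝ := ∑ e ∈ Ssel M π φ, M.c e

/-- An adaptive covering policy of minimum expected cost. -/
def IsOptimal (π : Sub E O → E) : Prop :=
  IsPolicy M π ∧ ∀ π' : Sub E O → E, IsPolicy M π' → Ex M (C M π) ≤ Ex M (C M π')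

/-- `N(π)`: the non-leaf nodes of the decision tree of `π` — subrealizations with
`f ψ < Q` that are visited with positive probability. -/
def Nnodes (π : Sub E O → E) : Finset (Sub E O) :=
  Finset.univ.filter fun ψ => M.f ψ < M.Q ∧ 0 < Pr M fun φ => visits M π φ ψ

/-- The event `ψ ↝ i`, for a marker located at utility value `b = f(ρ_i)`:
`ψ` is the last subrealization visited by `σ` (on the given realization) whose
utility is at most `b`. -/
def leadsTo (σ : Sub E O → E) (b : ℝ) (ψ : Sub E O) (φ : E → O) : Prop :=
  visits M σ φ ψ ∧ M.f ψ ≤ b ∧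
    ∀ ψ' : Sub E O, visits M σ φ ψ' → M.f ψ' ≤ b → subext ψ' ψ

/-- The revenue `λ_i = υ_ψ · ε_i` collected by `σ` from the marker located at utility
value `b = f(ρ_i)` with interval length `εi`, where `ψ` is the unique subrealization
with `ψ ↝ i`. -/
def lam (σ : Sub E O → E) (b εi : ℝ) (φ : E → O) : ℝ :=
  ∑ ψ : Sub E O, if leadsTo M σ b ψ φ then price M ψ (σ ψ) * εi else 0

/-- The revenue `μ(e)` collected by the optimal policy `πs` from item `e`
(relative to the greedy policy `σ`, both executed on the same realization). -/
def mu (σ πs : Sub E O → E) (e : E) (φ : E → O) : ℝ :=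
  if e ∈ Ssel M πs φ then
    if e ∈ Ssel M σ φ then
      ∑ ψ : Sub E O,
        if visits M σ φ ψ ∧ M.f ψ < M.Q ∧ σ ψ = e then price M ψ e * Fm M ψ e φ else 0
    else M.c e
  else 0

/-- The total revenue `μ*` collected by the optimal policy. -/
def muStar (σ πs : Sub E O → E) (φ : E → O) : ℝ := ∑ e : E, mu M σ πs e φ

/-- Replay of the internal state of policy `πs` in the second stage of the hybrid policy:
starting from the empty subrealization, repeatedly query `πs`; an item whose state is
already recorded in `ψ'` is not re-selected, its recorded state being used instead. -/
def replayAux (πs : Sub E O → E) (ψ' : Sub E O) : ℕ → Sub E O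
  | 0 => fun _ => none
  | n + 1 =>
    if M.f (replayAux πs ψ' n) < M.Q then
      match ψ' (πs (replayAux πs ψ' n)) with
      | some o => updateSub (replayAux πs ψ' n) (πs (replayAux πs ψ' n)) o
      | none => replayAux πs ψ' n
    else replayAux πs ψ' n

/-- The hybrid policy `π^ψ0`: follow `σ` until `ψ0` is visited, then switch to executing
`πs` from the root of its tree, never re-selecting an item of `dom ψ0` and using the
state recorded in `ψ0` instead. -/
def hybrid (σ πs : Sub E O → E) (ψ0 : Sub E O) : Sub E O → E := fun ψ' =>
  if subext ψ0 ψ' then πs (replayAux M πs ψ' (Fintype.card E)) else σ ψ'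

/-- `δ⁺_ψ0(e)`: the marginal utility obtained by the hybrid policy `π^ψ0` when it selects
`e` during its second stage, and `0` if `e` is not selected in the second stage. -/
def deltaPlus (σ πs : Sub E O → E) (ψ0 : Sub E O) (e : E) (φ : E → O) : ℝ :=
  ∑ ψ' : Sub E O,
    if subext ψ0 ψ' ∧ visits M (hybrid M σ πs ψ0) φ ψ' ∧
        ssubext ψ' (cover M (hybrid M σ πs ψ0) φ) ∧ hybrid M σ πs ψ0 ψ' = e
    then Fm M ψ' e φ else 0


/-! ### Helper lemmas -/

theorem hsum_inv (e : E) (A : (E → O) → ℝ) (B : O → ℝ)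
    (hA : ∀ φ o, A (Function.update φ e o) = A φ) :
    Ex M (fun φ => A φ * B (φ e)) = Ex M A * Ex M (fun φ => B (φ e)) := by
  obtain ⟨q, hq⟩ : ∃ q : E → O → ℝ, ∀ e o, q e o = ∑ φ' : E → O, if φ' e = o then M.p φ' else 0 :=
    ⟨_, fun _ _ => rfl⟩
  have hp : ∀ φ : E → O, M.p φ = ∏ e : E, q e (φ e) := by
    intro φ; rw [M.indep φ]; simp only [hq]
  have hmarg : ∀ B : O → ℝ, Ex M (fun φ => B (φ e)) = ∑ o, q e o * B o := by
    intro B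
    unfold Ex
    simp only [hq, Finset.sum_mul]
    rw [Finset.sum_comm]
    refine Finset.sum_congr rfl fun φ _ => ?_
    simp [ite_mul]
  have hq1 : ∑ o, q e o = 1 := by
    have := hmarg (fun _ => 1)
    simp only [Ex, mul_one, M.p_sum] at this
    exact this.symm
  have hswap : ∀ (φ : E → O) (o : O),
      M.p (Function.update φ e o) * q e (φ e) = M.p φ * q e o := by
    intro φ o
    rw [hp, hp, ← Finset.mul_prod_erase _ _ (Finset.mem_univ e),
      ← Finset.mul_prod_erase _ (fun x => q x (φ x)) (Finset.mem_univ e)]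
    have : ∏ x ∈ Finset.univ.erase e, q x (Function.update φ e o x)
        = ∏ x ∈ Finset.univ.erase e, q x (φ x) := by
      refine Finset.prod_congr rfl fun x hx => ?_
      rw [Function.update_of_ne (Finset.ne_of_mem_erase hx)]
    rw [this, Function.update_self]; ring
  rw [hmarg]
  let sw : (E → O) × O → (E → O) × O := fun x => (Function.update x.1 e x.2, x.1 e)
  have hsw : Function.Involutive sw := by
    rintro ⟨φ, o⟩; simp [sw]
  have key := Equiv.sum_comp hsw.toPerm
    (fun x : (E → O) × O => M.p x.1 * A x.1 * (q e x.2 * B x.2))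
  have h1 : ∑ x : (E → O) × O, M.p x.1 * A x.1 * (q e x.2 * B x.2)
      = Ex M A * ∑ o, q e o * B o := by
    rw [Fintype.sum_prod_type]; unfold Ex; rw [Finset.sum_mul_sum]
  rw [← h1, ← key, Fintype.sum_prod_type]
  unfold Ex
  refine Finset.sum_congr rfl fun φ _ => ?_
  have : ∀ o, M.p (sw (φ, o)).1 * A (sw (φ, o)).1 * (q e (sw (φ, o)).2 * B (sw (φ, o)).2)
      = (M.p φ * (A φ * B (φ e))) * q e o := by
    intro o
    simp only [sw, hA]
    linear_combination (A φ * B (φ e)) * hswap φ o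
  simp only [Function.Involutive.coe_toPerm, this]
  rw [← Finset.mul_sum, hq1, mul_one]

theorem ex_mono {X Y : (E → O) → ℝ} (h : ∀ φ, X φ ≤ Y φ) : Ex M X ≤ Ex M Y :=
  Finset.sum_le_sum fun φ _ => mul_le_mul_of_nonneg_left (h φ) (M.p_nonneg φ)

theorem ex_sum {ι : Type*} (s : Finset ι) (X : ι → (E → O) → ℝ) :
    Ex M (fun φ => ∑ i ∈ s, X i φ) = ∑ i ∈ s, Ex M (X i) := by
  unfold Ex
  simp only [Finset.mul_sum]
  rw [Finset.sum_comm]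

theorem ex_cmul (a : ℝ) (X : (E → O) → ℝ) : Ex M (fun φ => a * X φ) = a * Ex M X := by
  unfold Ex
  rw [Finset.mul_sum]
  exact Finset.sum_congr rfl fun φ _ => by ring

theorem ex_add (X Y : (E → O) → ℝ) : Ex M (fun φ => X φ + Y φ) = Ex M X + Ex M Y := by
  unfold Ex
  rw [← Finset.sum_add_distrib]
  exact Finset.sum_congr rfl fun φ _ => by ring

theorem f_le_Q (ψ : Sub E O) : M.f ψ ≤ M.Q := by
  have hne : Nonempty (E → O) := by
    by_contra h
    have := M.p_sum
    rw [not_nonempty_iff] at h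
    simp at this
  obtain ⟨φ⟩ := hne
  rw [← M.f_cover (fun e => (ψ e).getD (φ e))]
  refine M.f_mono _ _ fun e o h => ?_
  simp [toSub, h]

theorem subext_update (ψ : Sub E O) (e : E) (o : O) (h : ψ e = none) :
    subext ψ (updateSub ψ e o) := by
  intro e' o' h'
  unfold updateSub
  split_ifs with h1
  · subst h1; simp [h] at h'
  · exact h'

theorem Fm_nonneg (ψ : Sub E O) (e : E) (h : ψ e = none) (φ : E → O) : 0 ≤ Fm M ψ e φ :=
  sub_nonneg.2 (M.f_mono _ _ (subext_update ψ e _ h))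

theorem exec_sub {π : Sub E O → E} (hπ : IsPolicy M π) (φ : E → O) (n : ℕ) :
    subext (execAux M π φ n) (execAux M π φ (n + 1)) := by
  rw [execAux, stepPol]
  split_ifs with h
  · exact subext_update _ _ _ (hπ _ h)
  · exact fun _ _ h => h

theorem exec_mono {π : Sub E O → E} (hπ : IsPolicy M π) (φ : E → O) {m n : ℕ} (hmn : m ≤ n) :
    subext (execAux M π φ m) (execAux M π φ n) := by
  induction n, hmn using Nat.le_induction with
  | base => exact fun _ _ h => h
  | succ n _ ih => exact fun e o h => exec_sub M hπ φ n e o (ih e o h)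

theorem exec_toSub (π : Sub E O → E) (φ : E → O) (n : ℕ) :
    subext (execAux M π φ n) (toSub φ) := by
  induction n with
  | zero => intro e o h; simp [execAux] at h
  | succ n ih =>
    rw [execAux, stepPol]
    split_ifs with h
    · intro e o h'
      unfold updateSub at h'
      split_ifs at h' with h1
      · subst h1; exact h'
      · exact ih e o h'
    · exact ih

theorem exec_agree {π : Sub E O → E} (hπ : IsPolicy M π) (φ φ' : E → O) (n : ℕ)
    (h : subext (execAux M π φ n) (toSub φ')) : execAux M π φ' n = execAux M π φ n := by
  induction n with
  | zero => rfl
  | succ n ih =>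
    have h1 := ih fun e o h' => h e o (exec_sub M hπ φ n e o h')
    rw [execAux, execAux, h1, stepPol, stepPol]
    split_ifs with h2
    · have : toSub φ' (π (execAux M π φ n)) = some (φ (π (execAux M π φ n))) := by
        apply h
        rw [execAux, stepPol, if_pos h2]
        simp [updateSub]
      simp only [toSub, Option.some.injEq] at this
      rw [this]
    · rfl

theorem exec_update {π : Sub E O → E} (hπ : IsPolicy M π) (φ : E → O) (n : ℕ) (e : E) (o : O)
    (h : execAux M π φ n e = none) :
    execAux M π (Function.update φ e o) n = execAux M π φ n := by
  apply exec_agree M hπ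
  intro e' o' h'
  have hne : e' ≠ e := by rintro rfl; simp [h] at h'
  have := exec_toSub M π φ n e' o' h'
  simpa [toSub, Function.update_of_ne hne] using this

theorem exec_update_iff {π : Sub E O → E} (hπ : IsPolicy M π) (φ : E → O) (n : ℕ) (e : E) (o : O)
    (ψ : Sub E O) (h : ψ e = none) :
    execAux M π (Function.update φ e o) n = ψ ↔ execAux M π φ n = ψ := by
  constructor
  · intro h1
    have := exec_update M hπ (Function.update φ e o) n e (φ e) (by rw [h1, h])
    simp only [Function.update_idem, Function.update_eq_self] at this
    rw [this, h1]
  · intro h1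
    rw [exec_update M hπ φ n e o (by rw [h1, h]), h1]

theorem sel_update {π : Sub E O → E} (hπ : IsPolicy M π) (φ : E → O) (e : E) (o : O) :
    e ∈ Ssel M π (Function.update φ e o) ↔ e ∈ Ssel M π φ := by
  rw [Ssel, Ssel, Finset.mem_filter, Finset.mem_filter]
  simp only [Finset.mem_univ, true_and, cover, ne_eq, not_iff_not]
  constructor
  · intro h
    have := exec_update M hπ (Function.update φ e o) _ e (φ e) h
    simp only [Function.update_idem, Function.update_eq_self] at this
    rw [this, h]
  · intro h
    rw [exec_update M hπ φ _ e o h, h]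

theorem exec_dom_card {π : Sub E O → E} (hπ : IsPolicy M π) (φ : E → O) (n : ℕ)
    (h : M.f (execAux M π φ n) < M.Q) :
    (Finset.univ.filter fun e => execAux M π φ n e ≠ none).card = n := by
  induction n with
  | zero => simp [execAux]
  | succ n ih =>
    have h1 : M.f (execAux M π φ n) < M.Q :=
      lt_of_le_of_lt (M.f_mono _ _ (exec_sub M hπ φ n)) h
    have h2 := hπ _ h1
    have h3 : (Finset.univ.filter fun e => execAux M π φ (n + 1) e ≠ none)
        = insert (π (execAux M π φ n)) (Finset.univ.filter fun e => execAux M π φ n e ≠ none) := by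
      ext e
      rw [Finset.mem_filter, Finset.mem_insert, Finset.mem_filter, execAux, stepPol, if_pos h1]
      by_cases he : e = π (execAux M π φ n)
      · simp [updateSub, he]
      · simp [updateSub, he]
    rw [h3, Finset.card_insert_of_notMem (by simp [h2]), ih h1]

theorem f_cover_eq {π : Sub E O → E} (hπ : IsPolicy M π) (φ : E → O) :
    M.f (cover M π φ) = M.Q := by
  refine le_antisymm (f_le_Q M _) ?_
  by_contra hlt
  rw [not_le] at hlt
  have h1 := exec_dom_card M hπ φ _ hlt
  rw [Finset.card_eq_iff_eq_univ, Finset.eq_univ_iff_forall] at h1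
  have h2 : M.f (toSub φ) ≤ M.f (cover M π φ) := by
    refine M.f_mono _ _ fun e o h => ?_
    have h3 := h1 e
    simp only [Finset.mem_filter, Finset.mem_univ, true_and] at h3
    obtain ⟨o', ho'⟩ := Option.ne_none_iff_exists'.1 h3
    have h4 := exec_toSub M π φ _ e o' ho'
    rw [h] at h4
    rw [cover, ho', h4]
  rw [M.f_cover] at h2
  linarith

theorem cost_eq {π : Sub E O → E} (hπ : IsPolicy M π) (g : E → ℝ) (φ : E → O) (n : ℕ) :
    ∑ e ∈ Finset.univ.filter (fun e => execAux M π φ n e ≠ none), g e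
      = ∑ k ∈ Finset.range n, if M.f (execAux M π φ k) < M.Q then g (π (execAux M π φ k)) else 0 := by
  induction n with
  | zero => simp [execAux]
  | succ n ih =>
    rw [Finset.sum_range_succ, ← ih]
    by_cases h1 : M.f (execAux M π φ n) < M.Q
    · have h2 := hπ _ h1
      have h3 : (Finset.univ.filter fun e => execAux M π φ (n + 1) e ≠ none)
          = insert (π (execAux M π φ n))
              (Finset.univ.filter fun e => execAux M π φ n e ≠ none) := by
        ext e
        rw [Finset.mem_filter, Finset.mem_insert, Finset.mem_filter, execAux, stepPol, if_pos h1]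
        by_cases he : e = π (execAux M π φ n)
        · simp [updateSub, he]
        · simp [updateSub, he]
      rw [h3, Finset.sum_insert (by simp [h2]), if_pos h1, add_comm]
    · rw [execAux, stepPol, if_neg h1, if_neg h1, add_zero]

/-- `ψ` overwritten by `φ` on `D`. -/
def joinSub (ψ : Sub E O) (φ : E → O) (D : Finset E) : Sub E O :=
  fun e => if e ∈ D then some (φ e) else ψ e

theorem join_bound (ψ : Sub E O) (φ : E → O) (hψ : subext ψ (toSub φ)) (D : Finset E) :
    M.f (joinSub ψ φ D) - M.f ψ ≤ ∑ e ∈ D, Fm M ψ e φ := by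
  induction D using Finset.induction_on with
  | empty =>
    have : joinSub ψ φ ∅ = ψ := by funext x; simp [joinSub]
    simp [this]
  | insert e D he ih =>
    rw [Finset.sum_insert he]
    by_cases h : ψ e = none
    · have h1 : joinSub ψ φ (insert e D) = updateSub (joinSub ψ φ D) e (φ e) := by
        funext x
        by_cases hx : x = e
        · subst hx; simp [joinSub, updateSub]
        · simp [joinSub, updateSub, hx]
      have h2 := M.f_submod ψ (joinSub ψ φ D) e (φ e) (by
        intro x o hx
        have := hψ x o hx
        simp only [toSub] at this
        unfold joinSub
        split_ifs
        · exact this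
        · exact hx) (by simp [joinSub, he, h])
      rw [h1]
      unfold Fm at *
      linarith
    · obtain ⟨o, ho⟩ := Option.ne_none_iff_exists'.1 h
      have h0 := hψ e o ho
      simp only [toSub] at h0
      have h1 : joinSub ψ φ (insert e D) = joinSub ψ φ D := by
        funext x
        by_cases hx : x = e
        · subst hx; simp [joinSub, he, ho, h0]
        · simp [joinSub, hx]
      have h2 : updateSub ψ e (φ e) = ψ := by
        funext x
        by_cases hx : x = e
        · subst hx; simp [updateSub, ho, h0]
        · simp [updateSub, hx]
      rw [h1]
      have : Fm M ψ e φ = 0 := by simp [Fm, h2]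
      linarith

theorem Fm_dom (ψ : Sub E O) (φ : E → O) (hψ : subext ψ (toSub φ)) (e : E) (h : ψ e ≠ none) :
    Fm M ψ e φ = 0 := by
  obtain ⟨o, ho⟩ := Option.ne_none_iff_exists'.1 h
  have h0 := hψ e o ho
  simp only [toSub] at h0
  have h2 : updateSub ψ e (φ e) = ψ := by
    funext x
    by_cases hx : x = e
    · subst hx; simp [updateSub, ho, h0]
    · simp [updateSub, hx]
  simp [Fm, h2]

theorem cover_bound {π : Sub E O → E} (hπ : IsPolicy M π) (ψ : Sub E O) (φ : E → O)
    (hψ : subext ψ (toSub φ)) : M.Q - M.f ψ ≤ ∑ e ∈ Ssel M π φ, Fm M ψ e φ := by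
  refine le_trans ?_ (join_bound M ψ φ hψ _)
  rw [← f_cover_eq M hπ φ]
  have : M.f (cover M π φ) ≤ M.f (joinSub ψ φ (Ssel M π φ)) := by
    refine M.f_mono _ _ fun e o h => ?_
    have h1 := exec_toSub M π φ _ e o h
    simp only [toSub] at h1
    have : e ∈ Ssel M π φ := by simp [Ssel, h]
    simp [joinSub, this, h1]
  linarith

theorem greedy_pos {α : ℝ} (hα : 1 ≤ α) {σ : Sub E O → E} (hσ : IsGreedy M α σ)
    (ψ : Sub E O) (h : M.f ψ < M.Q) : 0 < Ex M (Fm M ψ (σ ψ)) := by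
  obtain ⟨φ, hφ⟩ : ∃ φ, 0 < M.p φ := by
    by_contra hc
    push Not at hc
    have := M.p_sum
    have h2 : ∑ φ : E → O, M.p φ ≤ 0 := Finset.sum_nonpos fun φ _ => hc φ
    linarith
  let φ' : E → O := fun e => (ψ e).getD (φ e)
  have hψ : subext ψ (toSub φ') := by
    intro e o ho
    simp [toSub, φ', ho]
  have h1 := cover_bound M hσ.1 ψ φ' hψ
  obtain ⟨e, -, he⟩ : ∃ e ∈ Ssel M σ φ', 0 < Fm M ψ e φ' := by
    by_contra hc
    push Not at hc
    have := Finset.sum_nonpos hc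
    linarith
  have hd : ψ e = none := by
    by_contra hc
    rw [Fm_dom M ψ φ' hψ e hc] at he
    exact lt_irrefl _ he
  have hEe : 0 < Ex M (Fm M ψ e) := by
    unfold Ex
    refine Finset.sum_pos' (fun φ _ => mul_nonneg (M.p_nonneg _) (Fm_nonneg M ψ e hd φ)) ⟨φ, Finset.mem_univ _, ?_⟩
    refine mul_pos hφ ?_
    have : φ' e = φ e := by simp [φ', hd]
    unfold Fm at he ⊢
    rwa [← this]
  have h2 := hσ.2 ψ h e hd
  have h3 : 0 < M.c (σ ψ) * Ex M (Fm M ψ e) := mul_pos (M.c_pos _) hEe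
  by_contra hc
  rw [not_lt] at hc
  have h4 : α * M.c e * Ex M (Fm M ψ (σ ψ)) ≤ 0 :=
    mul_nonpos_of_nonneg_of_nonpos (mul_nonneg (by linarith) (M.c_pos e).le) hc
  linarith

/-- Indicator of `e` being selected by `π`. -/
def selInd (π : Sub E O → E) (e : E) (φ : E → O) : ℝ := if e ∈ Ssel M π φ then 1 else 0

/-- Revenue correction at step `n`, node `ψ`, item `e`. -/
def corr (σ : Sub E O → E) (e : E) (n : ℕ) (ψ : Sub E O) (φ : E → O) : ℝ :=
  if execAux M σ φ n = ψ ∧ M.f ψ < M.Q ∧ σ ψ = e then price M ψ e * Fm M ψ e φ - M.c e else 0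

/-- Revenue of the optimal policy from `e`. -/
def rev (σ πs : Sub E O → E) (e : E) (φ : E → O) : ℝ :=
  selInd M πs e φ * (M.c e + ∑ n ∈ Finset.range (Fintype.card E), ∑ ψ, corr M σ e n ψ φ)

theorem corr_ex {α : ℝ} (hα : 1 ≤ α) {σ : Sub E O → E} (hσ : IsGreedy M α σ) (e : E) (n : ℕ)
    (ψ : Sub E O) (A : (E → O) → ℝ) (hA : ∀ φ o, A (Function.update φ e o) = A φ) :
    Ex M (fun φ => A φ * corr M σ e n ψ φ) = 0 := by
  by_cases h : M.f ψ < M.Q ∧ σ ψ = e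
  · obtain ⟨h1, h2⟩ := h
    have hd : ψ e = none := by rw [← h2]; exact hσ.1 ψ h1
    have hpos := greedy_pos M hα hσ ψ h1
    rw [h2] at hpos
    have := hsum_inv M e (fun φ => A φ * if execAux M σ φ n = ψ then 1 else 0)
      (fun o => price M ψ e * (M.f (updateSub ψ e o) - M.f ψ) - M.c e) (by
        intro φ o
        simp only [hA, exec_update_iff M hσ.1 φ n e o ψ hd])
    have hz : Ex M (fun φ => price M ψ e * (M.f (updateSub ψ e (φ e)) - M.f ψ) - M.c e) = 0 := by
      have h3 := ex_add M (fun φ => price M ψ e * Fm M ψ e φ) (fun _ => - M.c e)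
      rw [ex_cmul] at h3
      have h4 : Ex M (fun _ => - M.c e) = - M.c e := by
        unfold Ex; rw [← Finset.sum_mul, M.p_sum, one_mul]
      have h5 : price M ψ e * Ex M (Fm M ψ e) = M.c e := by
        unfold price; field_simp
      rw [h4] at h3
      have h6 : Ex M (fun φ => price M ψ e * (M.f (updateSub ψ e (φ e)) - M.f ψ) - M.c e)
        = price M ψ e * Ex M (Fm M ψ e) + - M.c e := h3
      rw [h6, h5]; ring
    rw [hz, mul_zero] at this
    rw [← this]
    congr 1
    funext φ
    unfold corr Fm
    by_cases h7 : execAux M σ φ n = ψ <;> simp [h7, h1, h2]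
  · have : ∀ φ, corr M σ e n ψ φ = 0 := by
      intro φ
      unfold corr
      rw [if_neg (fun hh => h hh.2)]
    simp [this, Ex]

theorem selInd_update {π : Sub E O → E} (hπ : IsPolicy M π) (e : E) (φ : E → O) (o : O) :
    selInd M π e (Function.update φ e o) = selInd M π e φ := by
  simp only [selInd, sel_update M hπ]

theorem rev_ex {α : ℝ} (hα : 1 ≤ α) {σ : Sub E O → E} (hσ : IsGreedy M α σ)
    {πs : Sub E O → E} (hπs : IsPolicy M πs) (e : E)
    (A : (E → O) → ℝ) (hA : ∀ φ o, A (Function.update φ e o) = A φ) :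
    Ex M (fun φ => A φ * rev M σ πs e φ) = M.c e * Ex M (fun φ => A φ * selInd M πs e φ) := by
  have h1 : (fun φ => A φ * rev M σ πs e φ) = fun φ => M.c e * (A φ * selInd M πs e φ) +
      ∑ n ∈ Finset.range (Fintype.card E), ∑ ψ, (A φ * selInd M πs e φ) * corr M σ e n ψ φ := by
    funext φ
    simp only [rev, ← Finset.mul_sum]
    ring
  rw [h1, ex_add, ex_cmul, ex_sum]
  simp only [ex_sum]
  rw [Finset.sum_eq_zero, add_zero]
  intro n _
  refine Finset.sum_eq_zero fun ψ _ => ?_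
  exact corr_ex M hα hσ e n ψ (fun φ => A φ * selInd M πs e φ)
    (fun φ o => by simp only [hA, selInd_update M hπs])

theorem corr_sum (σ : Sub E O → E) (e : E) (n : ℕ) (φ : E → O) :
    ∑ ψ, corr M σ e n ψ φ =
      if M.f (execAux M σ φ n) < M.Q ∧ σ (execAux M σ φ n) = e then
        price M (execAux M σ φ n) e * Fm M (execAux M σ φ n) e φ - M.c e else 0 := by
  rw [Finset.sum_eq_single (execAux M σ φ n)]
  · simp [corr]
  · intro ψ _ h
    unfold corr
    rw [if_neg]
    exact fun hh => h hh.1.symm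
  · simp

theorem exec_sel_dom {π : Sub E O → E} (φ : E → O) (hπ : IsPolicy M π) {m n : ℕ} (hmn : m < n)
    (h : M.f (execAux M π φ m) < M.Q) : execAux M π φ n (π (execAux M π φ m)) ≠ none := by
  have : execAux M π φ (m + 1) (π (execAux M π φ m)) = some (φ (π (execAux M π φ m))) := by
    rw [execAux, stepPol, if_pos h]; simp [updateSub]
  rw [exec_mono M hπ φ hmn _ _ this]
  simp

theorem exec_inj {π : Sub E O → E} (φ : E → O) (hπ : IsPolicy M π) {m n : ℕ}
    (h : M.f (execAux M π φ m) < M.Q) (h' : M.f (execAux M π φ n) < M.Q)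
    (heq : π (execAux M π φ m) = π (execAux M π φ n)) : m = n := by
  rcases lt_trichotomy m n with hl | hl | hl
  · have := exec_sel_dom M φ hπ hl h
    rw [heq] at this
    exact absurd (hπ _ h') this
  · exact hl
  · have := exec_sel_dom M φ hπ hl h'
    rw [← heq] at this
    exact absurd (hπ _ h) this

theorem rev_node {σ : Sub E O → E} (hσ : IsPolicy M σ) (πs : Sub E O → E) (φ : E → O) (m : ℕ)
    (hm : m < Fintype.card E) (h : M.f (execAux M σ φ m) < M.Q) :
    rev M σ πs (σ (execAux M σ φ m)) φ = selInd M πs (σ (execAux M σ φ m)) φ *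
      (price M (execAux M σ φ m) (σ (execAux M σ φ m)) *
        Fm M (execAux M σ φ m) (σ (execAux M σ φ m)) φ) := by
  unfold rev
  rw [Finset.sum_eq_single m]
  · rw [corr_sum, if_pos ⟨h, rfl⟩]; ring
  · intro n _ hn
    rw [corr_sum, if_neg]
    rintro ⟨h1, h2⟩
    exact hn (exec_inj M φ hσ h1 h h2)
  · intro hh; exact absurd (Finset.mem_range.2 hm) hh

theorem selInd_nonneg (π : Sub E O → E) (e : E) (φ : E → O) : 0 ≤ selInd M π e φ := by
  unfold selInd; split_ifs <;> norm_num

theorem price_nonneg {α : ℝ} (hα : 1 ≤ α) {σ : Sub E O → E} (hσ : IsGreedy M α σ)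
    (ψ : Sub E O) (h : M.f ψ < M.Q) : 0 ≤ price M ψ (σ ψ) :=
  div_nonneg (M.c_pos _).le (greedy_pos M hα hσ ψ h).le

theorem rev_nonneg {α : ℝ} (hα : 1 ≤ α) {σ : Sub E O → E} (hσ : IsGreedy M α σ)
    (πs : Sub E O → E) (e : E) (φ : E → O) : 0 ≤ rev M σ πs e φ := by
  by_cases h : ∃ m, m < Fintype.card E ∧ M.f (execAux M σ φ m) < M.Q ∧ σ (execAux M σ φ m) = e
  · obtain ⟨m, hm, h1, rfl⟩ := h
    rw [rev_node M hσ.1 πs φ m hm h1]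
    exact mul_nonneg (selInd_nonneg M _ _ _) (mul_nonneg (price_nonneg M hα hσ _ h1)
      (Fm_nonneg M _ _ (hσ.1 _ h1) _))
  · unfold rev
    rw [Finset.sum_eq_zero, add_zero]
    · exact mul_nonneg (selInd_nonneg M _ _ _) (M.c_pos e).le
    · intro n hn
      rw [corr_sum, if_neg]
      exact fun hh => h ⟨n, Finset.mem_range.1 hn, hh⟩

/-- Indicator that step `n` of `σ` is at `ψ` and raises the utility past `i`. -/
def lead (σ : Sub E O → E) (i n : ℕ) (ψ : Sub E O) (φ : E → O) : ℝ :=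
  if execAux M σ φ n = ψ ∧ M.f ψ ≤ i ∧ (i : ℝ) < M.f (updateSub ψ (σ ψ) (φ (σ ψ))) then 1 else 0

theorem lead_nonneg (σ : Sub E O → E) (i n : ℕ) (ψ : Sub E O) (φ : E → O) :
    0 ≤ lead M σ i n ψ φ := by
  unfold lead; split_ifs <;> norm_num

theorem lead_sum (σ : Sub E O → E) (i n : ℕ) (φ : E → O) (hi : (i : ℝ) < M.Q) :
    ∑ ψ, lead M σ i n ψ φ =
      if M.f (execAux M σ φ n) ≤ i ∧ (i : ℝ) < M.f (execAux M σ φ (n + 1)) then 1 else 0 := by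
  rw [Finset.sum_eq_single (execAux M σ φ n)]
  · unfold lead
    by_cases h : M.f (execAux M σ φ n) ≤ i
    · have : M.f (execAux M σ φ n) < M.Q := lt_of_le_of_lt h hi
      rw [execAux, stepPol, if_pos this]
      simp
    · simp [h]
  · intro ψ _ h
    unfold lead
    rw [if_neg]
    exact fun hh => h hh.1.symm
  · simp

theorem lead_sum_sum {σ : Sub E O → E} (hσ : IsPolicy M σ) (i N : ℕ) (φ : E → O)
    (hi : (i : ℝ) < M.Q) :
    ∑ n ∈ Finset.range N, ∑ ψ, lead M σ i n ψ φ =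
      if (i : ℝ) < M.f (execAux M σ φ N) then 1 else 0 := by
  induction N with
  | zero =>
    have : ¬ ((i : ℝ) < 0) := not_lt.2 (Nat.cast_nonneg i)
    simp [execAux, M.f_empty, this]
  | succ N ih =>
    rw [Finset.sum_range_succ, ih, lead_sum M σ i N φ hi]
    have hm := M.f_mono _ _ (exec_sub M hσ φ N)
    by_cases h : (i : ℝ) < M.f (execAux M σ φ N)
    · have h2 := lt_of_lt_of_le h hm
      simp [h, h2, not_le.2 h]
    · simp [h, not_lt.1 h]

theorem node_bound {α : ℝ} (hα : 1 ≤ α) {σ : Sub E O → E} (hσ : IsGreedy M α σ)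
    {πs : Sub E O → E} (hπs : IsPolicy M πs) (i n : ℕ) (hn : n < Fintype.card E)
    (hi : (i : ℝ) < M.Q) (ψ : Sub E O) :
    (M.Q - i) * (price M ψ (σ ψ) * Ex M (lead M σ i n ψ)) ≤
      α * ∑ e, Ex M (fun φ => lead M σ i n ψ φ * rev M σ πs e φ) := by
  have hR : ∀ e, 0 ≤ Ex M (fun φ => lead M σ i n ψ φ * rev M σ πs e φ) := fun e =>
    Finset.sum_nonneg fun φ _ => mul_nonneg (M.p_nonneg _)
      (mul_nonneg (lead_nonneg M _ _ _ _ _) (rev_nonneg M hα hσ πs e φ))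
  by_cases hψ : M.f ψ ≤ i
  swap
  · have : ∀ φ, lead M σ i n ψ φ = 0 := fun φ => by
      unfold lead; rw [if_neg]; exact fun hh => hψ hh.2.1
    simp [this, Ex]
  have hQ : M.f ψ < M.Q := lt_of_le_of_lt hψ hi
  have hpr := price_nonneg M hα hσ ψ hQ
  have hpos := greedy_pos M hα hσ ψ hQ
  have step1 : (M.Q - i) * Ex M (lead M σ i n ψ) ≤
      ∑ e, Ex M (fun φ => (lead M σ i n ψ φ * selInd M πs e φ) * Fm M ψ e φ) := by
    rw [← ex_sum, ← ex_cmul]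
    refine ex_mono M fun φ => ?_
    by_cases hl : execAux M σ φ n = ψ
    · have hs : subext ψ (toSub φ) := hl ▸ exec_toSub M σ φ n
      have hb := cover_bound M hπs ψ φ hs
      have he : ∑ e, (lead M σ i n ψ φ * selInd M πs e φ) * Fm M ψ e φ
          = lead M σ i n ψ φ * ∑ e ∈ Ssel M πs φ, Fm M ψ e φ := by
        have h0 : ∑ e ∈ Ssel M πs φ, Fm M ψ e φ = ∑ e, selInd M πs e φ * Fm M ψ e φ := by
          simp [selInd, ite_mul]
        rw [h0, Finset.mul_sum]
        exact Finset.sum_congr rfl fun e _ => by ring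
      rw [he, mul_comm]
      exact mul_le_mul_of_nonneg_left (by linarith) (lead_nonneg M _ _ _ _ _)
    · have : lead M σ i n ψ φ = 0 := by
        unfold lead; rw [if_neg]; exact fun hh => hl hh.1
      simp [this]
  have step2 : ∀ e, price M ψ (σ ψ) *
      Ex M (fun φ => (lead M σ i n ψ φ * selInd M πs e φ) * Fm M ψ e φ) ≤
      α * Ex M (fun φ => lead M σ i n ψ φ * rev M σ πs e φ) := by
    intro e
    by_cases hd : ψ e = none
    · by_cases hes : e = σ ψ
      · subst hes
        rw [← ex_cmul]
        have : (fun φ => price M ψ (σ ψ) *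
            ((lead M σ i n ψ φ * selInd M πs (σ ψ) φ) * Fm M ψ (σ ψ) φ))
            = fun φ => lead M σ i n ψ φ * rev M σ πs (σ ψ) φ := by
          funext φ
          by_cases hl : execAux M σ φ n = ψ
          · have := rev_node M hσ.1 πs φ n hn (by rw [hl]; exact hQ)
            rw [hl] at this
            rw [this]; ring
          · have : lead M σ i n ψ φ = 0 := by
              unfold lead; rw [if_neg]; exact fun hh => hl hh.1
            simp [this]
        rw [this]
        exact le_mul_of_one_le_left (hR _) hα
      · have hLinv : ∀ φ o, lead M σ i n ψ (Function.update φ e o) = lead M σ i n ψ φ := by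
          intro φ o
          simp only [lead, exec_update_iff M hσ.1 φ n e o ψ hd,
            Function.update_of_ne (Ne.symm hes)]
        rw [rev_ex M hα hσ hπs e _ hLinv]
        have := hsum_inv M e (fun φ => lead M σ i n ψ φ * selInd M πs e φ)
          (fun o => M.f (updateSub ψ e o) - M.f ψ)
          (fun φ o => by simp only [hLinv, selInd_update M hπs])
        have h2 : Ex M (fun φ => (lead M σ i n ψ φ * selInd M πs e φ) * Fm M ψ e φ) =
          Ex M (fun φ => lead M σ i n ψ φ * selInd M πs e φ) * Ex M (Fm M ψ e) := this
        rw [h2]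
        have h3 := hσ.2 ψ hQ e hd
        have h4 : price M ψ (σ ψ) * Ex M (Fm M ψ e) ≤ α * M.c e := by
          unfold price
          rw [div_mul_eq_mul_div, div_le_iff₀ hpos]
          exact h3
        have h5 : 0 ≤ Ex M (fun φ => lead M σ i n ψ φ * selInd M πs e φ) :=
          Finset.sum_nonneg fun φ _ => mul_nonneg (M.p_nonneg _)
            (mul_nonneg (lead_nonneg M _ _ _ _ _) (selInd_nonneg M _ _ _))
        have := mul_le_mul_of_nonneg_right h4 h5
        linarith
    · have : (fun φ => (lead M σ i n ψ φ * selInd M πs e φ) * Fm M ψ e φ) = fun _ => 0 := by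
        funext φ
        by_cases hl : execAux M σ φ n = ψ
        · rw [Fm_dom M ψ φ (hl ▸ exec_toSub M σ φ n) e hd, mul_zero]
        · have : lead M σ i n ψ φ = 0 := by
            unfold lead; rw [if_neg]; exact fun hh => hl hh.1
          simp [this]
      rw [this]
      have h0 : Ex M (fun _ => (0 : ℝ)) = 0 := by simp [Ex]
      rw [h0, mul_zero]
      exact mul_nonneg (by linarith) (hR e)
  calc (M.Q - i) * (price M ψ (σ ψ) * Ex M (lead M σ i n ψ))
      = price M ψ (σ ψ) * ((M.Q - i) * Ex M (lead M σ i n ψ)) := by ring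
    _ ≤ price M ψ (σ ψ) * _ := mul_le_mul_of_nonneg_left step1 hpr
    _ ≤ _ := by
      rw [Finset.mul_sum, Finset.mul_sum]
      exact Finset.sum_le_sum fun e _ => step2 e

theorem level_bound {α : ℝ} (hα : 1 ≤ α) {σ : Sub E O → E} (hσ : IsGreedy M α σ)
    {πs : Sub E O → E} (hπs : IsPolicy M πs) (i : ℕ) (hi : (i : ℝ) < M.Q) :
    (M.Q - i) * ∑ n ∈ Finset.range (Fintype.card E), ∑ ψ,
      price M ψ (σ ψ) * Ex M (lead M σ i n ψ) ≤ α * Ex M (C M πs) := by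
  have hC : Ex M (C M πs) = ∑ e, Ex M (rev M σ πs e) := by
    have h1 : C M πs = fun φ => ∑ e, M.c e * selInd M πs e φ := by
      funext φ; simp [C, selInd]
    rw [h1, ex_sum]
    refine Finset.sum_congr rfl fun e _ => ?_
    have := rev_ex M hα hσ hπs e (fun _ => 1) (fun _ _ => rfl)
    simp only [one_mul] at this
    rw [ex_cmul]; exact this.symm
  have hL : ∑ n ∈ Finset.range (Fintype.card E), ∑ ψ, ∑ e,
      Ex M (fun φ => lead M σ i n ψ φ * rev M σ πs e φ) ≤ ∑ e, Ex M (rev M σ πs e) := by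
    simp only [← ex_sum]
    refine ex_mono M fun φ => ?_
    simp only [← Finset.mul_sum]
    simp only [← Finset.sum_mul]
    rw [lead_sum_sum M hσ.1 i _ φ hi]
    have h0 : 0 ≤ ∑ e, rev M σ πs e φ := Finset.sum_nonneg fun e _ => rev_nonneg M hα hσ πs e φ
    split_ifs
    · rw [one_mul]
    · rw [zero_mul]; exact h0
  rw [hC]
  refine le_trans ?_ (mul_le_mul_of_nonneg_left hL (by linarith))
  simp only [Finset.mul_sum (Finset.range _), Finset.mul_sum (Finset.univ : Finset (Sub E O))]
  refine Finset.sum_le_sum fun n hn => Finset.sum_le_sum fun ψ _ => ?_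
  exact node_bound M hα hσ hπs i n (Finset.mem_range.1 hn) hi ψ

theorem count_levels (a b N : ℕ) (hab : a ≤ b) (hb : b ≤ N) :
    ∑ i ∈ Finset.range N, (if (a : ℝ) ≤ i ∧ (i : ℝ) < b then (1 : ℝ) else 0) = (b : ℝ) - a := by
  have : ∀ i : ℕ, ((a : ℝ) ≤ i ∧ (i : ℝ) < b) ↔ i ∈ Finset.Ico a b := by
    intro i; rw [Finset.mem_Ico, Nat.cast_le, Nat.cast_lt]
  simp only [this]
  rw [← Finset.sum_filter]
  have h2 : (Finset.range N).filter (fun i => i ∈ Finset.Ico a b) = Finset.Ico a b := by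
    ext i; simp only [Finset.mem_filter, Finset.mem_range, Finset.mem_Ico]; omega
  rw [h2]
  simp [Nat.cast_sub hab]

theorem greedy_cost {α : ℝ} (hα : 1 ≤ α) {σ : Sub E O → E} (hσ : IsGreedy M α σ)
    (hint : ∀ ψ : Sub E O, ∃ k : ℕ, M.f ψ = k) (Qn : ℕ) (hQn : M.Q = Qn) :
    Ex M (C M σ) = ∑ i ∈ Finset.range Qn, ∑ n ∈ Finset.range (Fintype.card E), ∑ ψ,
      price M ψ (σ ψ) * Ex M (lead M σ i n ψ) := by
  have h1 : C M σ = fun φ => ∑ n ∈ Finset.range (Fintype.card E), ∑ ψ,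
      (if M.f ψ < M.Q then M.c (σ ψ) else 0) * (if execAux M σ φ n = ψ then 1 else 0) := by
    funext φ
    unfold C Ssel cover
    rw [cost_eq M hσ.1]
    refine Finset.sum_congr rfl fun n _ => ?_
    simp
  rw [h1, ex_sum, Finset.sum_comm]
  refine Finset.sum_congr rfl fun n _ => ?_
  rw [ex_sum, Finset.sum_comm]
  refine Finset.sum_congr rfl fun ψ _ => ?_
  rw [ex_cmul, ← Finset.mul_sum, ← ex_sum]
  by_cases hQ : M.f ψ < M.Q
  · rw [if_pos hQ]
    have hpos := greedy_pos M hα hσ ψ hQ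
    have hd := hσ.1 ψ hQ
    have h2 : (fun φ => ∑ i ∈ Finset.range Qn, lead M σ i n ψ φ)
        = fun φ => (if execAux M σ φ n = ψ then 1 else 0) * Fm M ψ (σ ψ) φ := by
      funext φ
      by_cases hl : execAux M σ φ n = ψ
      · obtain ⟨a, ha⟩ := hint ψ
        obtain ⟨b, hb⟩ := hint (updateSub ψ (σ ψ) (φ (σ ψ)))
        have hab : a ≤ b := by
          have := Fm_nonneg M ψ _ hd φ
          unfold Fm at this
          rw [ha, hb] at this
          exact_mod_cast sub_nonneg.1 this
        have hbN : b ≤ Qn := by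
          have := f_le_Q M (updateSub ψ (σ ψ) (φ (σ ψ)))
          rw [hb, hQn] at this
          exact_mod_cast this
        have := count_levels a b Qn hab hbN
        simp only [lead, hl, Fm, ha, hb, true_and, if_true, one_mul]
        exact this
      · simp [lead, hl]
    rw [h2]
    have h3 := hsum_inv M (σ ψ) (fun φ => if execAux M σ φ n = ψ then 1 else 0)
      (fun o => M.f (updateSub ψ (σ ψ) o) - M.f ψ) (by
        intro φ o
        simp only [exec_update_iff M hσ.1 φ n (σ ψ) o ψ hd])
    have h4 : Ex M (fun φ => (if execAux M σ φ n = ψ then 1 else 0) * Fm M ψ (σ ψ) φ) =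
      Ex M (fun φ => if execAux M σ φ n = ψ then 1 else 0) * Ex M (Fm M ψ (σ ψ)) := h3
    rw [h4]
    unfold price
    field_simp
  · have hz : ∀ φ, ∑ i ∈ Finset.range Qn, lead M σ i n ψ φ = 0 := by
      intro φ
      refine Finset.sum_eq_zero fun i hi => ?_
      unfold lead
      rw [if_neg]
      rintro ⟨-, h, -⟩
      have : (i : ℝ) < Qn := by exact_mod_cast Finset.mem_range.1 hi
      rw [hQn] at hQ
      exact hQ (lt_of_le_of_lt h this)
    simp [hz, hQ, Ex]

/-- If the utility function is integer valued (with integer goal value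
`Qn`), the α-approximate adaptive greedy policy achieves approximation factor
`α · H(Qn)`, where `H` is the harmonic number. -/
theorem greedy_approx_int
    (M : Problem E O) (α : ℝ) (hα : 1 ≤ α)
    (σ : Sub E O → E) (hσ : IsGreedy M α σ)
    (πs : Sub E O → E) (hπs : IsOptimal M πs)
    (hint : ∀ ψ : Sub E O, ∃ k : ℕ, M.f ψ = k)
    (Qn : ℕ) (hQn : M.Q = Qn) :
    Ex M (C M σ) ≤ α * (∑ j ∈ Finset.Icc 1 Qn, (1 : ℝ) / j) * Ex M (C M πs) := by
  rw [greedy_cost M hα hσ hint Qn hQn]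
  have hH : ∑ j ∈ Finset.Icc 1 Qn, (1 : ℝ) / j
      = ∑ i ∈ Finset.range Qn, 1 / ((Qn : ℝ) - i) := by
    refine Finset.sum_bij' (fun j _ => Qn - j) (fun i _ => Qn - i) ?_ ?_ ?_ ?_ ?_
    · intro j hj; simp only [Finset.mem_Icc, Finset.mem_range] at *; omega
    · intro j hj; simp only [Finset.mem_Icc, Finset.mem_range] at *; omega
    · intro j hj; simp only [Finset.mem_Icc, Finset.mem_range] at *; omega
    · intro j hj; simp only [Finset.mem_Icc, Finset.mem_range] at *; omega
    · intro j hj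
      simp only [Finset.mem_Icc] at hj
      rw [Nat.cast_sub hj.2]
      congr 1; ring
  rw [hH, Finset.mul_sum, Finset.sum_mul]
  refine Finset.sum_le_sum fun i hi => ?_
  have hiQ : (i : ℝ) < Qn := by exact_mod_cast Finset.mem_range.1 hi
  have h := level_bound M hα hσ hπs.1 i (by rw [hQn]; exact hiQ)
  rw [hQn] at h
  have hp : (0 : ℝ) < Qn - i := by linarith
  rw [mul_one_div, div_mul_eq_mul_div, le_div_iff₀ hp]
  linarith

end
end SSC
end

section
/- For every item e ∈ E and every subrealization ψ at which the greedy policy σ selects e (i.e., ψ ∈ σ_{-1}[e]), the expected marginal utility of e conditioned on e being selected by both σ and π* and on σ visiting ψ equals its unconditional expectation: E[F_ψ(e) | e ∈ S(σ) ∩ S(π*) and ψ ⊂ Ψ(σ)] = E[F_ψ(e)]. -/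
/-!
Common framework for the Stochastic Submodular Cover problem
(Hellerstein–Kletenik–Parthasarathy, "A Tight Bound for Stochastic Submodular Cover").
-/

namespace SSC

open Finset
open scoped Classical

noncomputable section

variable {E O : Type*}

variable [Fintype E] [DecidableEq E] [Fintype O] [DecidableEq O]

variable (M : Problem E O)

theorem subext_toSub_exec (M : Problem E O) (π : Sub E O → E) (φ : E → O) (n : ℕ) :
    subext (execAux M π φ n) (toSub φ) := by
  induction n with
  | zero => intro i o h; simp [execAux] at h
  | succ n ih =>
    intro i o h
    simp only [execAux, stepPol] at h
    split_ifs at h with hf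
    · simp only [updateSub] at h
      split_ifs at h with hi
      · subst hi; exact h
      · exact ih i o h
    · exact ih i o h

theorem subext_exec_succ (M : Problem E O) (π : Sub E O → E) (hπ : IsPolicy M π)
    (φ : E → O) (n : ℕ) : subext (execAux M π φ n) (execAux M π φ (n + 1)) := by
  intro i o h
  simp only [execAux, stepPol]
  split_ifs with hf
  · simp only [updateSub]
    split_ifs with hi
    · have := hπ _ hf
      rw [← hi, h] at this
      cases this
    · exact h
  · exact h

theorem subext_exec_le (M : Problem E O) (π : Sub E O → E) (hπ : IsPolicy M π)
    (φ : E → O) {m n : ℕ} (hmn : m ≤ n) : subext (execAux M π φ m) (execAux M π φ n) := by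
  induction hmn with
  | refl => intro i o h; exact h
  | step _ ih => intro i o h; exact subext_exec_succ M π hπ φ _ i o (ih i o h)

theorem exec_eq_of_subext (M : Problem E O) (π : Sub E O → E) (hπ : IsPolicy M π)
    (φ φ' : E → O) (n : ℕ) (h : subext (execAux M π φ' n) (toSub φ)) :
    execAux M π φ n = execAux M π φ' n := by
  induction n with
  | zero => rfl
  | succ n ih =>
    have ih' := ih (fun i o hi => h i o (subext_exec_succ M π hπ φ' n i o hi))
    simp only [execAux] at h ⊢
    rw [ih']
    simp only [stepPol] at h ⊢
    split_ifs at h ⊢ with hf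
    · have := h (π (execAux M π φ' n)) (φ' (π (execAux M π φ' n))) (by simp [updateSub])
      simp only [toSub, Option.some.injEq] at this
      rw [this]
    · rfl

theorem card_exec (M : Problem E O) (π : Sub E O → E) (hπ : IsPolicy M π)
    (φ : E → O) (n : ℕ) (hf : M.f (execAux M π φ n) < M.Q) :
    (Finset.univ.filter fun i => execAux M π φ n i ≠ none).card = n := by
  induction n with
  | zero => simp [execAux]
  | succ n ih =>
    by_cases hq : M.f (execAux M π φ n) < M.Q
    · have h1 := ih hq
      have h2 : (Finset.univ.filter fun i => execAux M π φ (n + 1) i ≠ none)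
          = insert (π (execAux M π φ n))
            (Finset.univ.filter fun i => execAux M π φ n i ≠ none) := by
        ext i
        simp only [execAux, stepPol, if_pos hq, updateSub, Finset.mem_filter, Finset.mem_univ,
          true_and, Finset.mem_insert]
        by_cases hi : i = π (execAux M π φ n) <;> simp [hi]
      rw [h2, Finset.card_insert_of_notMem, h1]
      simp [hπ _ hq]
    · exfalso
      simp only [execAux, stepPol, if_neg hq] at hf
      exact hq hf

theorem exec_agree_s4 (M : Problem E O) (π : Sub E O → E) (e : E)
    (φ φ' : E → O) (hag : ∀ i, i ≠ e → φ i = φ' i) (n : ℕ) :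
    execAux M π φ n = execAux M π φ' n ∨
      (execAux M π φ n e ≠ none ∧ execAux M π φ' n e ≠ none) := by
  have key : ∀ (χ : E → O) (ρ : Sub E O), ρ e ≠ none → stepPol M π χ ρ e ≠ none := by
    intro χ ρ h
    simp only [stepPol]
    split_ifs
    · simp only [updateSub]
      split_ifs
      · simp
      · exact h
    · exact h
  induction n with
  | zero => left; rfl
  | succ n ih =>
    rcases ih with ih | ⟨h1, h2⟩
    · simp only [execAux]
      rw [ih]
      by_cases hf : M.f (execAux M π φ' n) < M.Q
      · by_cases he : π (execAux M π φ' n) = e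
        · right
          simp [stepPol, hf, updateSub, he]
        · left
          simp only [stepPol, if_pos hf, hag _ he]
      · left
        simp only [stepPol, if_neg hf]
    · right
      exact ⟨key _ _ h1, key _ _ h2⟩

theorem mem_Ssel_agree (M : Problem E O) (π : Sub E O → E) (e : E)
    (φ φ' : E → O) (hag : ∀ i, i ≠ e → φ i = φ' i) :
    e ∈ Ssel M π φ ↔ e ∈ Ssel M π φ' := by
  simp only [Ssel, Finset.mem_filter, Finset.mem_univ, true_and]
  change execAux M π φ (Fintype.card E) e ≠ none ↔ execAux M π φ' (Fintype.card E) e ≠ none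
  rcases exec_agree_s4 M π e φ φ' hag (Fintype.card E) with h | ⟨h1, h2⟩
  · rw [h]
  · exact ⟨fun _ => h2, fun _ => h1⟩

theorem ssubext_cover_iff (M : Problem E O) (σ : Sub E O → E) (hσ : IsPolicy M σ)
    (ψ : Sub E O) (hf : M.f ψ < M.Q) (φ' : E → O) (hv : visits M σ φ' ψ) (φ : E → O) :
    ssubext ψ (cover M σ φ) ↔ subext ψ (toSub φ) := by
  constructor
  · rintro ⟨h, -⟩ i o hi
    exact subext_toSub_exec M σ φ _ i o (h i o hi)
  · intro h
    obtain ⟨n, rfl⟩ := hv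
    have hn := exec_eq_of_subext M σ hσ φ φ' n h
    have hc := card_exec M σ hσ φ' n hf
    have hnone := hσ _ hf
    have hlt : n < Fintype.card E := by
      rw [← hc, ← Finset.card_univ]
      apply Finset.card_lt_card
      rw [Finset.filter_ssubset]
      exact ⟨σ (execAux M σ φ' n), Finset.mem_univ _, by simp [hnone]⟩
    have hsucc := subext_exec_le M σ hσ φ (Nat.succ_le_of_lt hlt)
    refine ⟨?_, ?_⟩
    · rw [← hn]
      exact subext_exec_le M σ hσ φ hlt.le
    · intro heq
      have h1 := hsucc (σ (execAux M σ φ' n)) (φ (σ (execAux M σ φ' n))) (by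
        simp [execAux, stepPol, hn, hf, updateSub])
      change cover M σ φ _ = _ at h1
      rw [← heq, hnone] at h1
      cases h1

theorem p_swap (M : Problem E O) (e : E) (φ φ' : E → O) :
    M.p (Function.update φ e (φ' e)) * M.p (Function.update φ' e (φ e)) = M.p φ * M.p φ' := by
  rw [M.indep (Function.update φ e (φ' e)), M.indep (Function.update φ' e (φ e)),
    M.indep φ, M.indep φ', ← Finset.prod_mul_distrib, ← Finset.prod_mul_distrib]
  refine Finset.prod_congr rfl fun i _ => ?_
  by_cases hi : i = e
  · subst hi
    simp only [Function.update_self]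
    exact mul_comm _ _
  · simp only [Function.update_of_ne hi]

theorem sum_indep (M : Problem E O) (e : E) (g : O → ℝ) (A : (E → O) → Prop)
    (hA : ∀ φ o, A (Function.update φ e o) ↔ A φ) :
    (∑ φ : E → O, if A φ then M.p φ * g (φ e) else 0)
      = (∑ φ : E → O, M.p φ * g (φ e)) * ∑ φ : E → O, if A φ then M.p φ else 0 := by
  have hinv : Function.Involutive (fun x : (E → O) × (E → O) =>
      ((Function.update x.1 e (x.2 e), Function.update x.2 e (x.1 e)) :
        (E → O) × (E → O))) := by
    rintro ⟨a, b⟩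
    simp
  have h1 : (∑ φ : E → O, if A φ then M.p φ * g (φ e) else 0)
      = ∑ x : (E → O) × (E → O), if A x.1 then M.p x.1 * M.p x.2 * g (x.1 e) else 0 := by
    rw [Fintype.sum_prod_type]
    refine Finset.sum_congr rfl fun φ _ => ?_
    split_ifs with h
    · dsimp only
      rw [← Finset.sum_mul, ← Finset.mul_sum, M.p_sum, mul_one]
    · simp
  have h2 : (∑ φ : E → O, M.p φ * g (φ e)) * (∑ φ : E → O, if A φ then M.p φ else 0)
      = ∑ x : (E → O) × (E → O), if A x.1 then M.p x.1 * M.p x.2 * g (x.2 e) else 0 := by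
    rw [Fintype.sum_prod_type, mul_comm, Finset.sum_mul]
    refine Finset.sum_congr rfl fun φ _ => ?_
    split_ifs with h
    · rw [Finset.mul_sum]
      refine Finset.sum_congr rfl fun φ' _ => ?_
      ring
    · simp
  rw [h1, h2, ← Equiv.sum_comp hinv.toPerm]
  refine Finset.sum_congr rfl fun x _ => ?_
  simp only [Function.Involutive.coe_toPerm, hA, p_swap, Function.update_self]

/-- For every item `e` and every node `ψ` of the greedy tree at which `σ`
selects `e`, the expected marginal utility of `e` conditioned on `e ∈ S(σ) ∩ S(π*)` and on
`σ` visiting `ψ` (i.e. `ψ ⊂ Ψ(σ)`) equals its unconditional expectation. -/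
theorem conditional_marginal_eq
    (M : Problem E O) (α : ℝ) (hα : 1 ≤ α)
    (σ : Sub E O → E) (hσ : IsGreedy M α σ)
    (πs : Sub E O → E) (hπs : IsOptimal M πs)
    (e : E) (ψ : Sub E O) (hmem : ψ ∈ Nnodes M σ) (hsel : σ ψ = e)
    (hpos : 0 < Pr M fun φ =>
      (e ∈ Ssel M σ φ ∧ e ∈ Ssel M πs φ) ∧ ssubext ψ (cover M σ φ)) :
    cEx M (Fm M ψ e)
        (fun φ => (e ∈ Ssel M σ φ ∧ e ∈ Ssel M πs φ) ∧ ssubext ψ (cover M σ φ))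
      = Ex M (Fm M ψ e) := by
  have hσp := hσ.1
  simp only [Nnodes, Finset.mem_filter, Finset.mem_univ, true_and] at hmem
  obtain ⟨hf, hvis⟩ := hmem
  obtain ⟨φ', hv⟩ : ∃ φ', visits M σ φ' ψ := by
    by_contra hcon
    push Not at hcon
    simp [Pr, hcon] at hvis
  have hnone : ψ e = none := hsel ▸ hσp ψ hf
  have hag : ∀ (φ : E → O) (o : O) (i : E), i ≠ e → Function.update φ e o i = φ i :=
    fun φ o i hi => Function.update_of_ne hi o φ
  have hA : ∀ φ o,
      ((e ∈ Ssel M σ (Function.update φ e o) ∧ e ∈ Ssel M πs (Function.update φ e o)) ∧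
        ssubext ψ (cover M σ (Function.update φ e o))) ↔
      ((e ∈ Ssel M σ φ ∧ e ∈ Ssel M πs φ) ∧ ssubext ψ (cover M σ φ)) := by
    intro φ o
    rw [mem_Ssel_agree M σ e _ φ (hag φ o), mem_Ssel_agree M πs e _ φ (hag φ o),
      ssubext_cover_iff M σ hσp ψ hf φ' hv, ssubext_cover_iff M σ hσp ψ hf φ' hv]
    refine and_congr_right fun _ => ?_
    refine forall_congr' fun i => forall_congr' fun o' => ?_
    by_cases hi : i = e
    · subst hi; simp [hnone]
    · simp only [toSub, hag φ o i hi]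
  rw [cEx, div_eq_iff hpos.ne']
  exact sum_indep M e (fun o => M.f (updateSub ψ e o) - M.f ψ) _ hA

end
end SSC
end
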